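/- arXiv:1902.09880 — 7 statements merged into one kernel-verified Lean document; each statement's English description precedes it below -/
import Mathlib

section
/- Let L = (S, ι, →) be an LTS and let norm(L) = (S', ι', →') be its normal form. For all sequences ρ ∈ Act* and all states U ∈ S' such that ι' ⟶ρ U in norm(L), it holds that ι ⇒ρ s in L for every s ∈ U. -/
/-- A labelled transition system with states `S` and visible actions `Act`.
Transition labels are `Option Act`, where `none` plays the role of the
internal action τ and `some a` is the visible action `a ∈ Act`. -/
structure LTS (S : Type*) (Act : Type*) where
  init : S
  tr : S → Option Act → S → Prop

namespace LTS

variable {S S₁ S₂ : Type*} {Act : Type*}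

/-- The trace relation: `s ⟶ε t` iff `s = t`, and `s ⟶(σ a) t` iff
`s ⟶σ u` and `u —a→ t` for some `u`. -/
inductive Trace (L : LTS S Act) : S → List (Option Act) → S → Prop
  | nil (s : S) : Trace L s [] s
  | snoc {s u t : S} {σ : List (Option Act)} {a : Option Act} :
      Trace L s σ u → L.tr u a t → Trace L s (σ ++ [a]) t

/-- The weak transition relation `s ⇒ρ t` for `ρ ∈ Act*`. -/
inductive Weak (L : LTS S Act) : S → List Act → S → Prop
  | refl (s : S) : Weak L s [] s
  | tau {s t : S} : L.tr s none t → Weak L s [] t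
  | act {s t : S} {a : Act} : L.tr s (some a) t → Weak L s [a] t
  | comp {s u t : S} {ρ σ : List Act} :
      Weak L s ρ u → Weak L u σ t → Weak L s (ρ ++ σ) t

/-- A state is reachable iff some trace leads from the initial state to it. -/
def Reachable (L : LTS S Act) (s : S) : Prop := ∃ σ, L.Trace L.init σ s

/-- A state is stable iff it has no outgoing τ-transition. -/
def Stable (L : LTS S Act) (s : S) : Prop := ¬ ∃ t, L.tr s none t

/-- A state diverges iff there is an infinite sequence of τ-transitions from it. -/
def Diverges (L : LTS S Act) (s : S) : Prop :=
  ∃ f : ℕ → S, f 0 = s ∧ ∀ n, L.tr (f n) none (f (n + 1))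

/-- The weak traces of an LTS. -/
def weaktraces (L : LTS S Act) : Set (List Act) := {ρ | ∃ t, L.Weak L.init ρ t}

/-- The divergences of an LTS: all `ρ σ` such that `ι ⇒ρ t` for a diverging `t`. -/
def divergences (L : LTS S Act) : Set (List Act) :=
  {w | ∃ ρ σ : List Act, w = ρ ++ σ ∧ ∃ t, L.Weak L.init ρ t ∧ L.Diverges t}

/-- The refusals of a (stable) state: all sets `X` of visible actions none of
which is enabled in `s`. -/
def refusals (L : LTS S Act) (s : S) : Set (Set Act) :=
  {X | ∀ a ∈ X, ¬ ∃ t, L.tr s (some a) t}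

/-- The refusals of a set of states. -/
def refusalsSet (L : LTS S Act) (U : Set S) : Set (Set Act) :=
  {X | ∃ s ∈ U, L.Stable s ∧ X ∈ L.refusals s}

/-- The stable failures of an LTS. -/
def failures (L : LTS S Act) : Set (List Act × Set Act) :=
  {p | ∃ t, L.Weak L.init p.1 t ∧ L.Stable t ∧ p.2 ∈ L.refusals t}

/-- The failures with post-divergence details obscured. -/
def failuresBot (L : LTS S Act) : Set (List Act × Set Act) :=
  L.failures ∪ {p | p.1 ∈ L.divergences}

/-- The normal form of an LTS. -/
def norm (L : LTS S Act) : LTS (Set S) Act where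
  init := {s | L.Weak L.init [] s}
  tr U a V := ∃ b : Act, a = some b ∧ V = {t | ∃ s ∈ U, L.Weak s [b] t}

/-- The failures-divergences normal form of an LTS. -/
def normFdr (L : LTS S Act) : LTS (Set S) Act where
  init := {s | L.Weak L.init [] s}
  tr U a V := ∃ b : Act, a = some b ∧ (¬ ∃ s ∈ U, L.Diverges s) ∧
      V = {t | ∃ s ∈ U, L.Weak s [b] t}

/-- The product of two LTSs. -/
def prod (L₁ : LTS S₁ Act) (L₂ : LTS S₂ Act) : LTS (S₁ × S₂) Act where
  init := (L₁.init, L₂.init)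
  tr p a q :=
    (a = none ∧ q.1 = p.1 ∧ L₂.tr p.2 none q.2) ∨
    (∃ b : Act, a = some b ∧ L₁.tr p.1 (some b) q.1 ∧ L₂.tr p.2 (some b) q.2)

end LTS


/-- every state of a normal form state reached via `ρ` is reached
via the weak trace `ρ` in the original LTS. -/
theorem norm_trace_mem_weak {S Act : Type*} (L : LTS S Act) :
    ∀ (ρ : List Act) (U : Set S),
      (L.norm).Trace (L.norm).init (ρ.map some) U →
        ∀ s ∈ U, L.Weak L.init ρ s := by
  have key : ∀ (I U : Set S) (w : List (Option Act)), (L.norm).Trace I w U →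
      I = (L.norm).init → ∀ ρ : List Act, w = ρ.map some → ∀ s ∈ U, L.Weak L.init ρ s := by
    intro I U w h
    induction h with
    | nil =>
      intro hI ρ hρ t ht
      have hnil : ρ = [] := by simpa using hρ.symm
      subst hnil
      subst hI
      exact ht
    | snoc h1 h2 ih =>
      intro hI ρ hρ t ht
      obtain ⟨b, hb, hV⟩ := h2
      obtain ⟨ρ₁, ρ₂, h3, h4, h5⟩ := List.map_eq_append_iff.mp hρ.symm
      subst hV
      obtain ⟨s, hs, hst⟩ := ht
      have h6 : ρ₂ = [b] := by
        rw [hb] at h5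
        simpa [List.map_eq_singleton_iff] using h5
      subst h3
      subst h6
      exact LTS.Weak.comp (ih hI ρ₁ h4.symm s hs) hst
  intro ρ U h
  exact key _ U _ h rfl ρ rfl
end

section
/- Let L1 = (S1, ι1, →1) and L2 = (S2, ι2, →2) be two LTSs. Then L1 ⊑tr L2 (i.e., weaktraces(L2) ⊆ weaktraces(L1)) holds if and only if no TR-witness is reachable in the product norm(L1) ⋉ L2, where a TR-witness is a product state (U, s) with U = ∅. -/
/-- A TR-witness is a product state whose first component is the empty set. -/
def TRwitness {S₁ S₂ : Type*} (p : Set S₁ × S₂) : Prop := p.1 = ∅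

theorem LTS.Weak.split {S Act : Type*} {L : LTS S Act} {s t : S} {w : List Act}
    (h : L.Weak s w t) : ∀ ρ σ : List Act, w = ρ ++ σ →
      ∃ u, L.Weak s ρ u ∧ L.Weak u σ t := by
  induction h with
  | refl s =>
    intro ρ σ e
    obtain ⟨rfl, rfl⟩ := List.append_eq_nil_iff.1 e.symm
    exact ⟨s, .refl s, .refl s⟩
  | @tau s t h =>
    intro ρ σ e
    obtain ⟨rfl, rfl⟩ := List.append_eq_nil_iff.1 e.symm
    exact ⟨s, .refl s, .tau h⟩
  | @act s t a h =>
    intro ρ σ e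
    rcases List.append_eq_singleton_iff.1 e.symm with ⟨rfl, rfl⟩ | ⟨rfl, rfl⟩
    · exact ⟨s, .refl s, .act h⟩
    · exact ⟨t, .act h, .refl t⟩
  | @comp s u t α β h1 h2 ih1 ih2 =>
    intro ρ σ e
    rcases List.append_eq_append_iff.1 e with ⟨γ, rfl, rfl⟩ | ⟨γ, rfl, rfl⟩
    · obtain ⟨v, hv1, hv2⟩ := ih2 γ σ rfl
      exact ⟨v, .comp h1 hv1, hv2⟩
    · obtain ⟨v, hv1, hv2⟩ := ih1 ρ γ rfl
      exact ⟨v, hv1, .comp hv2 h2⟩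

theorem LTS.after_snoc {S Act : Type*} (L : LTS S Act) (ρ : List Act) (b : Act) :
    {t | L.Weak L.init (ρ ++ [b]) t} =
      {t | ∃ s ∈ {t | L.Weak L.init ρ t}, L.Weak s [b] t} := by
  ext t
  constructor
  · intro h
    exact LTS.Weak.split h ρ [b] rfl
  · rintro ⟨s, h1, h2⟩
    exact .comp h1 h2

theorem LTS.reach_fwd {S₁ S₂ Act : Type*} (L₁ : LTS S₁ Act) (L₂ : LTS S₂ Act)
    {u t : S₂} {ρ : List Act} (h : L₂.Weak u ρ t) :
    ∀ ρ₀ : List Act, ((L₁.norm).prod L₂).Reachable ({x | L₁.Weak L₁.init ρ₀ x}, u) →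
      ((L₁.norm).prod L₂).Reachable ({x | L₁.Weak L₁.init (ρ₀ ++ ρ) x}, t) := by
  induction h with
  | refl s => intro ρ₀ h; simpa using h
  | tau h =>
    rintro ρ₀ ⟨σ, hσ⟩
    rw [List.append_nil]
    exact ⟨_, .snoc hσ (Or.inl ⟨rfl, rfl, h⟩)⟩
  | @act s t a h =>
    rintro ρ₀ ⟨σ, hσ⟩
    exact ⟨_, .snoc hσ (Or.inr ⟨a, rfl, ⟨a, rfl, L₁.after_snoc ρ₀ a⟩, h⟩)⟩
  | comp h1 h2 ih1 ih2 =>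
    intro ρ₀ h
    rw [← List.append_assoc]
    exact ih2 _ (ih1 _ h)

theorem LTS.reach_bwd {S₁ S₂ Act : Type*} (L₁ : LTS S₁ Act) (L₂ : LTS S₂ Act)
    {p q : Set S₁ × S₂} {σ : List (Option Act)} (h : ((L₁.norm).prod L₂).Trace p σ q) :
    p = ((L₁.norm).prod L₂).init →
    ∃ ρ, L₂.Weak L₂.init ρ q.2 ∧ q.1 = {x | L₁.Weak L₁.init ρ x} := by
  induction h with
  | nil => rintro rfl; exact ⟨[], .refl _, rfl⟩
  | snoc h1 h2 ih =>
    intro e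
    obtain ⟨ρ, hw, hU⟩ := ih e
    rcases h2 with ⟨_, h3, h4⟩ | ⟨b, _, ⟨c, hc, h3⟩, h4⟩
    · refine ⟨ρ, ?_, h3.trans hU⟩
      simpa using LTS.Weak.comp hw (.tau h4)
    · obtain rfl := Option.some.inj hc
      refine ⟨ρ ++ [b], .comp hw (.act h4), ?_⟩
      rw [h3, hU, L₁.after_snoc]

/-- trace refinement holds iff no TR-witness is reachable in the
product of the normal form of the specification and the implementation. -/
theorem trace_refinement_iff {S₁ S₂ Act : Type*} (L₁ : LTS S₁ Act) (L₂ : LTS S₂ Act) :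
    L₂.weaktraces ⊆ L₁.weaktraces ↔
      ¬ ∃ p : Set S₁ × S₂, ((L₁.norm).prod L₂).Reachable p ∧ TRwitness p := by
  constructor
  · rintro h ⟨p, ⟨σ, hσ⟩, hp⟩
    obtain ⟨ρ, hw, hU⟩ := LTS.reach_bwd L₁ L₂ hσ rfl
    obtain ⟨t, ht⟩ := h ⟨_, hw⟩
    have h0 : t ∈ p.1 := by rw [hU]; exact ht
    rw [show p.1 = ∅ from hp] at h0
    exact h0
  · rintro h ρ ⟨t, ht⟩
    by_contra hn
    refine h ⟨_, LTS.reach_fwd L₁ L₂ ht [] ⟨[], .nil _⟩, ?_⟩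
    exact Set.eq_empty_iff_forall_notMem.2 fun x hx => hn ⟨x, hx⟩
end

section
/- Let L = (S, ι, →) be an LTS and let norm_fdr(L) = (S', ι', →') be its failures-divergences normal form. For all sequences ρ ∈ Act* and all states U ∈ S', if ι' ⟶ρ U in norm_fdr(L) and no state of U diverges, then ρ ∉ divergences(L). -/
theorem LTS.weak_split_aux {S Act : Type*} (L : LTS S Act) {s t : S} {w : List Act}
    (h : L.Weak s w t) : ∀ ρ σ : List Act, w = ρ ++ σ →
      ∃ u, L.Weak s ρ u ∧ L.Weak u σ t := by
  induction h with
  | refl s =>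
    intro ρ σ h
    obtain ⟨rfl, rfl⟩ := List.append_eq_nil_iff.mp h.symm
    exact ⟨s, .refl s, .refl s⟩
  | @tau s t hst =>
    intro ρ σ h
    obtain ⟨rfl, rfl⟩ := List.append_eq_nil_iff.mp h.symm
    exact ⟨s, .refl s, .tau hst⟩
  | @act s t a hst =>
    intro ρ σ h
    rcases List.append_eq_singleton_iff.mp h.symm with ⟨rfl, rfl⟩ | ⟨rfl, rfl⟩
    · exact ⟨s, .refl s, .act hst⟩
    · exact ⟨t, .act hst, .refl t⟩
  | @comp s u t ρ₁ σ₁ h₁ h₂ ih₁ ih₂ =>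
    intro ρ σ h
    rcases List.append_eq_append_iff.mp h with ⟨x, rfl, hx⟩ | ⟨x, rfl, rfl⟩
    · obtain ⟨v, hv₁, hv₂⟩ := ih₂ _ _ hx
      exact ⟨v, .comp h₁ hv₁, hv₂⟩
    · obtain ⟨v, hv₁, hv₂⟩ := ih₁ _ _ rfl
      exact ⟨v, hv₁, .comp hv₂ h₂⟩

theorem LTS.normFdr_trace_inv {S Act : Type*} (L : LTS S Act) {I U : Set S}
    {w : List (Option Act)} (h : L.normFdr.Trace I w U) (hI : I = L.normFdr.init) :
    ∀ ρ : List Act, w = ρ.map some →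
      U = {t | L.Weak L.init ρ t} ∧
      ∀ ρ' σ : List Act, ρ = ρ' ++ σ → σ ≠ [] → ∀ t, L.Weak L.init ρ' t → ¬ L.Diverges t := by
  induction h with
  | nil =>
    intro ρ h
    obtain rfl := List.map_eq_nil_iff.mp h.symm
    refine ⟨hI, ?_⟩
    intro ρ' σ h hσ
    exact absurd (List.append_eq_nil_iff.mp h.symm).2 hσ
  | @snoc U V w a h₁ h₂ ih =>
    intro ρ hρ
    obtain ⟨b, rfl, hdiv, rfl⟩ := h₂
    obtain ⟨ρ₁, ρ₂, rfl, hw, hb⟩ := List.map_eq_append_iff.mp hρ.symm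
    obtain ⟨c, rfl, hc⟩ := List.map_eq_singleton_iff.mp hb
    obtain rfl := Option.some.inj hc
    obtain ⟨rfl, ih₂⟩ := ih ρ₁ hw.symm
    constructor
    · ext t
      constructor
      · rintro ⟨s, hs, hst⟩
        exact .comp hs hst
      · intro ht
        exact L.weak_split_aux ht _ _ rfl
    · intro ρ' σ h hσ t ht hd
      rcases List.eq_nil_or_concat σ with rfl | ⟨σ', d, rfl⟩
      · exact hσ rfl
      · simp only [List.concat_eq_append] at h
        rw [← List.append_assoc] at h
        have h3 := (List.append_inj' h rfl).1
        by_cases h0 : σ' = []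
        · subst h0
          rw [List.append_nil] at h3
          subst h3
          exact hdiv ⟨t, ht, hd⟩
        · exact ih₂ ρ' σ' h3 h0 t ht hd

/-- if `ρ` leads in the failures-divergences normal form to a
state none of whose members diverges, then `ρ` is not a divergence of `L`. -/
theorem normFdr_trace_not_divergence {S Act : Type*} (L : LTS S Act) :
    ∀ (ρ : List Act) (U : Set S),
      (L.normFdr).Trace (L.normFdr).init (ρ.map some) U →
        (¬ ∃ s ∈ U, L.Diverges s) →
          ρ ∉ L.divergences := by
  intro ρ U h hU hρ
  obtain ⟨rfl, h2⟩ := L.normFdr_trace_inv h rfl ρ rfl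
  obtain ⟨ρ', σ, e, t, ht, hd⟩ := hρ
  by_cases h0 : σ = []
  · subst h0
    rw [List.append_nil] at e
    subst e
    exact hU ⟨t, ht, hd⟩
  · exact h2 ρ' σ e h0 t ht hd
end

section
/- Let L1 = (S1, ι1, →1) and L2 = (S2, ι2, →2) be two LTSs. Then L1 ⊑fdr L2 (i.e., failures_⊥(L2) ⊆ failures_⊥(L1) and divergences(L2) ⊆ divergences(L1)) holds if and only if no FD-witness is reachable in the product norm_fdr(L1) ⋉ L2, where a product state (U, s) is an FD-witness iff no state of U diverges and at least one of the following holds: U = ∅; s is stable and refusals(s) ⊄ refusals(U); or s diverges. -/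
/-- An FD-witness: no state of `U` diverges, and `U = ∅`, or `s` is stable and
some refusal of `s` is not a refusal of `U`, or `s` diverges. -/
def FDwitness {S₁ S₂ Act : Type*} (L₁ : LTS S₁ Act) (L₂ : LTS S₂ Act)
    (p : Set S₁ × S₂) : Prop :=
  (¬ ∃ u ∈ p.1, L₁.Diverges u) ∧
    (p.1 = ∅ ∨ (L₂.Stable p.2 ∧ ¬ L₂.refusals p.2 ⊆ L₁.refusalsSet p.1) ∨
      L₂.Diverges p.2)

namespace LTS

theorem Weak.split_s11 {S Act : Type*} {L : LTS S Act} {s t : S} {w : List Act}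
    (h : L.Weak s w t) : ∀ ρ σ : List Act, w = ρ ++ σ →
      ∃ u, L.Weak s ρ u ∧ L.Weak u σ t := by
  induction h with
  | refl s =>
    intro ρ σ h
    obtain ⟨rfl, rfl⟩ := List.append_eq_nil_iff.1 h.symm
    exact ⟨s, .refl s, .refl s⟩
  | @tau s t h1 =>
    intro ρ σ h
    obtain ⟨rfl, rfl⟩ := List.append_eq_nil_iff.1 h.symm
    exact ⟨s, .refl s, .tau h1⟩
  | @act s t a h1 =>
    intro ρ σ h
    cases ρ with
    | nil =>
      simp only [List.nil_append] at h
      subst h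
      exact ⟨s, .refl s, .act h1⟩
    | cons b ρ =>
      simp only [List.cons_append, List.cons.injEq] at h
      obtain ⟨rfl, h⟩ := h
      obtain ⟨rfl, rfl⟩ := List.append_eq_nil_iff.1 h.symm
      exact ⟨t, .act h1, .refl t⟩
  | @comp s u t ρ₁ σ₁ h1 h2 ih1 ih2 =>
    intro ρ σ h
    rcases List.append_eq_append_iff.1 h with ⟨c, h3, h4⟩ | ⟨c, h3, h4⟩
    · obtain ⟨v, hv1, hv2⟩ := ih2 c σ h4
      exact ⟨v, h3 ▸ Weak.comp h1 hv1, hv2⟩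
    · obtain ⟨v, hv1, hv2⟩ := ih1 ρ c h3
      exact ⟨v, hv1, h4 ▸ Weak.comp hv2 h2⟩

/-- The states weakly reachable by `ρ`. -/
def after {S Act : Type*} (L : LTS S Act) (ρ : List Act) : Set S :=
  {t | L.Weak L.init ρ t}

theorem after_snoc_s11 {S Act : Type*} (L : LTS S Act) (ρ : List Act) (a : Act) :
    L.after (ρ ++ [a]) = {t | ∃ s ∈ L.after ρ, L.Weak s [a] t} := by
  ext t
  constructor
  · intro h
    exact Weak.split_s11 h ρ [a] rfl
  · rintro ⟨s, h1, h2⟩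
    exact Weak.comp h1 h2

theorem div_append {S Act : Type*} {L : LTS S Act} {ρ : List Act} (σ : List Act)
    (h : ρ ∈ L.divergences) : ρ ++ σ ∈ L.divergences := by
  obtain ⟨ρ', σ', rfl, h⟩ := h
  exact ⟨ρ', σ' ++ σ, by simp, h⟩

theorem reach_inv {S₁ S₂ Act : Type*} {L₁ : LTS S₁ Act} {L₂ : LTS S₂ Act}
    {p₀ p : Set S₁ × S₂} {τ : List (Option Act)}
    (h : ((L₁.normFdr).prod L₂).Trace p₀ τ p)
    (h₀ : p₀ = ((L₁.normFdr).prod L₂).init) :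
    ∃ ρ, p.1 = L₁.after ρ ∧ L₂.Weak L₂.init ρ p.2 ∧
      ((¬ ∃ u ∈ p.1, L₁.Diverges u) → ρ ∉ L₁.divergences) := by
  induction h with
  | nil =>
    subst h₀
    refine ⟨[], rfl, .refl _, ?_⟩
    rintro h ⟨ρ, σ, h1, t, h2, h3⟩
    obtain ⟨rfl, rfl⟩ := List.append_eq_nil_iff.1 h1.symm
    exact h ⟨t, h2, h3⟩
  | snoc _ htr ih =>
    obtain ⟨ρ, h1, h2, h3⟩ := ih
    rcases htr with ⟨-, e, ht⟩ | ⟨b, -, ⟨c, hc, hnd, hV⟩, ht⟩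
    · refine ⟨ρ, e.trans h1, by simpa using Weak.comp h2 (.tau ht), ?_⟩
      rw [e]
      exact h3
    · obtain rfl : b = c := Option.some.inj hc
      have e := hV
      rw [h1, ← after_snoc_s11] at e
      refine ⟨ρ ++ [b], e, Weak.comp h2 (.act ht), ?_⟩
      rintro h ⟨ρ', σ', h4, t, h5, h6⟩
      rcases List.eq_nil_or_concat σ' with rfl | ⟨σ'', x, rfl⟩
      · rw [List.append_nil] at h4
        subst h4
        exact h ⟨t, e ▸ h5, h6⟩
      · rw [List.concat_eq_append, ← List.append_assoc] at h4
        have h7 := (List.append_inj' h4 rfl).1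
        exact h3 hnd ⟨ρ', σ'', h7, t, h5, h6⟩

theorem reach_of_weak {S₁ S₂ Act : Type*} (L₁ : LTS S₁ Act) {L₂ : LTS S₂ Act}
    {s t : S₂} {ρ : List Act} (h : L₂.Weak s ρ t) :
    ∀ ρ₀, ((L₁.normFdr).prod L₂).Reachable (L₁.after ρ₀, s) →
      ((L₁.normFdr).prod L₂).Reachable (L₁.after (ρ₀ ++ ρ), t) ∨
        ρ₀ ++ ρ ∈ L₁.divergences := by
  induction h with
  | refl s =>
    intro ρ₀ h
    left
    simpa using h
  | tau h1 =>
    rintro ρ₀ ⟨σ, h⟩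
    left
    rw [List.append_nil]
    exact ⟨_, .snoc h (Or.inl ⟨rfl, rfl, h1⟩)⟩
  | @act s t a h1 =>
    rintro ρ₀ ⟨σ, h⟩
    by_cases hd : ∃ u ∈ L₁.after ρ₀, L₁.Diverges u
    · right
      obtain ⟨u, hu, hd⟩ := hd
      exact ⟨ρ₀, [a], rfl, u, hu, hd⟩
    · left
      exact ⟨_, .snoc h (Or.inr ⟨a, rfl, ⟨a, rfl, hd, after_snoc_s11 _ _ _⟩, h1⟩)⟩
  | comp _ _ ih1 ih2 =>
    intro ρ₀ h
    rw [← List.append_assoc]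
    rcases ih1 ρ₀ h with h | h
    · exact ih2 _ h
    · exact Or.inr (div_append _ h)

theorem diverges_or_stable {S Act : Type*} (L : LTS S Act) (s : S) :
    L.Diverges s ∨ ∃ t, L.Weak s [] t ∧ L.Stable t := by
  by_cases h : ∃ t, L.Weak s [] t ∧ L.Stable t
  · exact Or.inr h
  · left
    have h' : ∀ x : {t // L.Weak s [] t}, ∃ y : {t // L.Weak s [] t},
        L.tr x.1 none y.1 := by
      rintro ⟨t, ht⟩
      by_contra hc
      refine h ⟨t, ht, ?_⟩
      rintro ⟨u, hu⟩
      exact hc ⟨⟨u, Weak.comp ht (.tau hu)⟩, hu⟩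
    choose g hg using h'
    refine ⟨fun n => (g^[n] ⟨s, .refl s⟩).1, rfl, fun n => ?_⟩
    simp only [Function.iterate_succ_apply']
    exact hg _

end LTS

/-- failures-divergences refinement holds iff no FD-witness is
reachable in the product of the failures-divergences normal form of the
specification and the implementation. -/
theorem failures_divergences_refinement_iff {S₁ S₂ Act : Type*}
    (L₁ : LTS S₁ Act) (L₂ : LTS S₂ Act) :
    (L₂.failuresBot ⊆ L₁.failuresBot ∧ L₂.divergences ⊆ L₁.divergences) ↔
      ¬ ∃ p : Set S₁ × S₂, ((L₁.normFdr).prod L₂).Reachable p ∧ FDwitness L₁ L₂ p := by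
  constructor
  · rintro ⟨hf, hd⟩ ⟨p, ⟨τ, hp⟩, hnd, hw⟩
    obtain ⟨ρ, h1, h2, h3⟩ := LTS.reach_inv hp rfl
    have hρ := h3 hnd
    have hdiv : ∀ t, L₂.Weak L₂.init ρ t → ¬ L₂.Diverges t := fun t ht hdt =>
      hρ (hd ⟨ρ, [], by simp, t, ht, hdt⟩)
    have hfail : ∀ t X, L₂.Weak L₂.init ρ t → L₂.Stable t → X ∈ L₂.refusals t →
        X ∈ L₁.refusalsSet p.1 := by
      intro t X ht hs hX
      have hm : (ρ, X) ∈ L₂.failuresBot := Or.inl ⟨t, ht, hs, hX⟩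
      rcases hf hm with ⟨u, hu1, hu2, hu3⟩ | h
      · rw [h1]
        exact ⟨u, hu1, hu2, hu3⟩
      · exact absurd h hρ
    rcases hw with he | ⟨hs, hr⟩ | hw
    · rcases L₂.diverges_or_stable p.2 with h | ⟨t, ht, hs⟩
      · exact hdiv _ h2 h
      · have h4 : L₂.Weak L₂.init ρ t := by simpa using LTS.Weak.comp h2 ht
        obtain ⟨u, hu, -⟩ := hfail t ∅ h4 hs (fun a ha => absurd ha (by simp))
        rw [he] at hu
        exact hu
    · exact hr fun X hX => hfail _ X h2 hs hX
    · exact hdiv _ h2 hw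
  · intro hno
    have key : ∀ ρ t, L₂.Weak L₂.init ρ t → ρ ∉ L₁.divergences →
        ¬ L₂.Diverges t ∧
          (L₂.Stable t → L₂.refusals t ⊆ L₁.refusalsSet (L₁.after ρ)) := by
      intro ρ t ht hρ
      have hr := (LTS.reach_of_weak L₁ ht [] ⟨[], .nil _⟩).resolve_right hρ
      rw [List.nil_append] at hr
      have hnd : ¬ ∃ u ∈ L₁.after ρ, L₁.Diverges u := by
        rintro ⟨u, hu, hd⟩
        exact hρ ⟨ρ, [], by simp, u, hu, hd⟩
      constructor
      · intro hd
        exact hno ⟨_, hr, hnd, Or.inr (Or.inr hd)⟩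
      · intro hs
        by_contra hc
        exact hno ⟨_, hr, hnd, Or.inr (Or.inl ⟨hs, hc⟩)⟩
    have hdiv : L₂.divergences ⊆ L₁.divergences := by
      rintro _ ⟨ρ, σ, rfl, t, ht, hd⟩
      apply LTS.div_append
      by_contra hρ
      exact (key ρ t ht hρ).1 hd
    refine ⟨?_, hdiv⟩
    rintro ⟨ρ, X⟩ (⟨t, ht, hs, hX⟩ | h)
    · by_cases hρ : ρ ∈ L₁.divergences
      · exact Or.inr hρ
      · exact Or.inl ((key ρ t ht hρ).2 hs hX)
    · exact Or.inr (hdiv h)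
end

section
/- If L1 ⊑fdr L2 holds (i.e., failures_⊥(L2) ⊆ failures_⊥(L1) and divergences(L2) ⊆ divergences(L1)), then no FD-witness is reachable in the product norm_fdr(L1) ⋉ L2, where a product state (U, s) is an FD-witness iff no state of U diverges and at least one of the following holds: U = ∅; s is stable and refusals(s) ⊄ refusals(U); or s diverges. -/
theorem LTS.exists_stable {S Act : Type*} (L : LTS S Act) (s : S)
    (h : ¬ L.Diverges s) : ∃ t, L.Weak s [] t ∧ L.Stable t := by
  by_contra hc
  apply h
  have step : ∀ x : {t // L.Weak s [] t}, ∃ y : {t // L.Weak s [] t}, L.tr x.1 none y.1 := by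
    rintro ⟨x, hx⟩
    by_contra hn
    refine hc ⟨x, hx, ?_⟩
    rintro ⟨y, hy⟩
    exact hn ⟨⟨y, LTS.Weak.comp hx (.tau hy)⟩, hy⟩
  choose g hg using step
  refine ⟨fun n => (g^[n] ⟨s, .refl s⟩).1, rfl, fun n => ?_⟩
  simp only [Function.iterate_succ_apply']
  exact hg _

/-- The invariant of product states reachable along a common weak trace. -/
def ProdInv {S₁ S₂ Act : Type*} (L₁ : LTS S₁ Act) (L₂ : LTS S₂ Act)
    (p : Set S₁ × S₂) : Prop :=
  ∃ ρ : List Act, L₂.Weak L₂.init ρ p.2 ∧ p.1 = {t | L₁.Weak L₁.init ρ t} ∧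
    ∀ ρ' σ, ρ = ρ' ++ σ → σ ≠ [] → ∀ t, L₁.Weak L₁.init ρ' t → ¬ L₁.Diverges t

theorem prodInv_of_trace {S₁ S₂ Act : Type*} (L₁ : LTS S₁ Act) (L₂ : LTS S₂ Act)
    {q p : Set S₁ × S₂} {σ : List (Option Act)}
    (h : ((L₁.normFdr).prod L₂).Trace q σ p) : ProdInv L₁ L₂ q → ProdInv L₁ L₂ p := by
  induction h with
  | nil => exact id
  | @snoc u t σ a _ htr ih =>
    intro hq
    obtain ⟨ρ, h1, h2, h3⟩ := ih hq
    rcases htr with ⟨-, e, ht⟩ | ⟨b, -, ⟨b', hb, hnd, hV⟩, ht⟩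
    · refine ⟨ρ, ?_, e.trans h2, h3⟩
      simpa using LTS.Weak.comp h1 (.tau ht)
    · obtain rfl : b = b' := by simpa using hb
      refine ⟨ρ ++ [b], .comp h1 (.act ht), ?_, ?_⟩
      · rw [hV, h2]
        ext x
        constructor
        · rintro ⟨s, hs, hx⟩
          exact LTS.Weak.comp hs hx
        · intro hx
          exact LTS.Weak.split hx _ _ rfl
      · intro ρ' σ' e hne x hx hd
        rcases List.append_eq_append_iff.1 e with ⟨c, rfl, e2⟩ | ⟨c, rfl, e2⟩
        · rcases List.append_eq_singleton_iff.1 e2.symm with ⟨rfl, _⟩ | ⟨_, e3⟩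
          · exact hnd ⟨x, by rw [h2]; simpa using hx, hd⟩
          · exact hne e3
        · by_cases hc : c = []
          · subst hc
            exact hnd ⟨x, by rw [h2]; simpa using hx, hd⟩
          · exact h3 _ _ rfl hc x hx hd

/-- if failures-divergences refinement holds then no FD-witness
is reachable in the product. -/
theorem failures_divergences_refinement_no_witness {S₁ S₂ Act : Type*}
    (L₁ : LTS S₁ Act) (L₂ : LTS S₂ Act)
    (hfail : L₂.failuresBot ⊆ L₁.failuresBot)
    (hdiv : L₂.divergences ⊆ L₁.divergences) :
    ¬ ∃ p : Set S₁ × S₂, ((L₁.normFdr).prod L₂).Reachable p ∧ FDwitness L₁ L₂ p := by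
  rintro ⟨⟨U, s⟩, ⟨σ, htr⟩, hnd, hw⟩
  obtain ⟨ρ, h1, h2, h3⟩ := prodInv_of_trace L₁ L₂ htr
    ⟨[], .refl _, rfl, fun ρ' σ e hne => absurd (List.append_eq_nil_iff.1 e.symm).2 hne⟩
  simp only at h1 h2 hnd hw
  subst h2
  have hρ : ρ ∉ L₁.divergences := by
    rintro ⟨ρ', σ', e, t, ht, hd⟩
    by_cases hc : σ' = []
    · subst hc
      rw [List.append_nil] at e
      subst e
      exact hnd ⟨t, ht, hd⟩
    · exact h3 _ _ e hc t ht hd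
  have hsd : ¬ L₂.Diverges s := fun hd =>
    hρ (hdiv ⟨ρ, [], by simp, s, h1, hd⟩)
  have key : ∀ t X, L₂.Weak L₂.init ρ t → L₂.Stable t → X ∈ L₂.refusals t →
      X ∈ L₁.refusalsSet {t | L₁.Weak L₁.init ρ t} := by
    intro t X ht hs hX
    have hm : (ρ, X) ∈ L₁.failuresBot := hfail (Or.inl ⟨t, ht, hs, hX⟩)
    rcases hm with ⟨u, hu⟩ | hm
    · exact ⟨u, hu⟩
    · exact absurd hm hρ
  rcases hw with hU | ⟨hs, hr⟩ | hd
  · obtain ⟨t, ht, hst⟩ := L₂.exists_stable s hsd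
    obtain ⟨u, hu, -⟩ := key t ∅ (by simpa using LTS.Weak.comp h1 ht) hst
      (fun a ha => absurd ha (Set.notMem_empty a))
    rw [hU] at hu
    exact hu
  · exact hr fun X hX => key s X h1 hs hX
  · exact hsd hd
end

section
/- If no FD-witness is reachable in the product norm_fdr(L1) ⋉ L2, then L1 ⊑fdr L2 holds (i.e., failures_⊥(L2) ⊆ failures_⊥(L1) and divergences(L2) ⊆ divergences(L1)), where a product state (U, s) is an FD-witness iff no state of U diverges and at least one of the following holds: U = ∅; s is stable and refusals(s) ⊄ refusals(U); or s diverges. -/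
/-- Divergences are closed under extension. -/
theorem divergences_append {S Act : Type*} (L : LTS S Act) {w : List Act}
    (hw : w ∈ L.divergences) (v : List Act) : w ++ v ∈ L.divergences := by
  obtain ⟨ρ, σ, rfl, t, ht⟩ := hw
  exact ⟨ρ, σ ++ v, by simp, t, ht⟩

/-- Weak traces of `L₂` are tracked in the product until `L₁` diverges. -/
theorem weak_track {S₁ S₂ Act : Type*} (L₁ : LTS S₁ Act) (L₂ : LTS S₂ Act)
    {s t : S₂} {ρ : List Act} (hw : L₂.Weak s ρ t) :
    ∀ (w : List Act) (U : Set S₁), (∀ u ∈ U, L₁.Weak L₁.init w u) →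
      ((L₁.normFdr).prod L₂).Reachable (U, s) →
      (w ++ ρ ∈ L₁.divergences) ∨
        ∃ V : Set S₁, (∀ v ∈ V, L₁.Weak L₁.init (w ++ ρ) v) ∧
          ((L₁.normFdr).prod L₂).Reachable (V, t) := by
  induction hw with
  | refl s =>
    intro w U hU hr
    exact Or.inr ⟨U, by simpa using hU, hr⟩
  | tau htr =>
    intro w U hU hr
    obtain ⟨σ, hσ⟩ := hr
    exact Or.inr ⟨U, by simpa using hU, _, LTS.Trace.snoc hσ (Or.inl ⟨rfl, rfl, htr⟩)⟩
  | @act s t a htr =>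
    intro w U hU hr
    obtain ⟨σ, hσ⟩ := hr
    by_cases hd : ∃ u ∈ U, L₁.Diverges u
    · obtain ⟨u, hu, hdu⟩ := hd
      exact Or.inl ⟨w, [a], rfl, u, hU u hu, hdu⟩
    · refine Or.inr ⟨{t | ∃ s ∈ U, L₁.Weak s [a] t}, ?_, _,
        LTS.Trace.snoc hσ (Or.inr ⟨a, rfl, ⟨a, rfl, hd, rfl⟩, htr⟩)⟩
      rintro v ⟨u, hu, huv⟩
      exact LTS.Weak.comp (hU u hu) huv
  | @comp s u t ρ σ _ _ ih1 ih2 =>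
    intro w U hU hr
    rw [← List.append_assoc]
    rcases ih1 w U hU hr with hd | ⟨V, hV, hrV⟩
    · exact Or.inl (divergences_append L₁ hd σ)
    · exact ih2 _ V hV hrV

/-- if no FD-witness is reachable in the product then
failures-divergences refinement holds. -/
theorem no_witness_failures_divergences_refinement {S₁ S₂ Act : Type*}
    (L₁ : LTS S₁ Act) (L₂ : LTS S₂ Act)
    (h : ¬ ∃ p : Set S₁ × S₂, ((L₁.normFdr).prod L₂).Reachable p ∧ FDwitness L₁ L₂ p) :
    L₂.failuresBot ⊆ L₁.failuresBot ∧ L₂.divergences ⊆ L₁.divergences := by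
  have key : ∀ ρ t, L₂.Weak L₂.init ρ t → ρ ∈ L₁.divergences ∨
      ∃ V : Set S₁, (∀ v ∈ V, L₁.Weak L₁.init ρ v) ∧
        ¬ FDwitness L₁ L₂ (V, t) ∧ ¬ ∃ u ∈ V, L₁.Diverges u := by
    intro ρ t hw
    rcases weak_track L₁ L₂ hw [] {s | L₁.Weak L₁.init [] s} (fun u hu => hu)
      ⟨[], LTS.Trace.nil _⟩ with hd | ⟨V, hV, hr⟩
    · exact Or.inl hd
    · by_cases hd : ∃ u ∈ V, L₁.Diverges u
      · obtain ⟨u, hu, hdu⟩ := hd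
        exact Or.inl ⟨ρ, [], by simp, u, hV u hu, hdu⟩
      · exact Or.inr ⟨V, hV, fun hf => h ⟨_, hr, hf⟩, hd⟩
  have hdiv : L₂.divergences ⊆ L₁.divergences := by
    rintro w ⟨ρ, σ, rfl, t, ht, hdt⟩
    rcases key ρ t ht with hd | ⟨V, _, hn, hd⟩
    · exact divergences_append L₁ hd σ
    · exact absurd ⟨hd, Or.inr (Or.inr hdt)⟩ hn
  refine ⟨?_, hdiv⟩
  rintro ⟨ρ, X⟩ (⟨t, ht, hst, hX⟩ | hp)
  · rcases key ρ t ht with hd | ⟨V, hV, hn, hd⟩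
    · exact Or.inr hd
    · by_cases hsub : L₂.refusals t ⊆ L₁.refusalsSet V
      · obtain ⟨v, hv, hsv, hXv⟩ := hsub hX
        exact Or.inl ⟨v, hV v hv, hsv, hXv⟩
      · exact absurd ⟨hd, Or.inr (Or.inl ⟨hst, hsub⟩)⟩ hn
  · exact Or.inr (hdiv hp)
end

section
/- Let L1, L2 be LTSs. For all states (U, s) and (V, s) of the product norm_fdr(L1) ⋉ L2 with U ⊆ V, and for every sequence σ ∈ Act_τ*: if (V, s) can reach an FD-witness by following σ (i.e., (V, s) ⟶σ (V', t) for some FD-witness (V', t)), then (U, s) can reach an FD-witness by following σ as well, where a product state (U, s) is an FD-witness iff no state of U diverges and at least one of the following holds: U = ∅; s is stable and refusals(s) ⊄ refusals(U); or s diverges. -/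
/-- Traces from the larger state are simulated from the smaller one. -/
theorem trace_sim {S₁ S₂ Act : Type*} (L₁ : LTS S₁ Act) (L₂ : LTS S₂ Act)
    (p q : Set S₁ × S₂) (σ : List (Option Act))
    (h : ((L₁.normFdr).prod L₂).Trace p σ q) (U : Set S₁) (hU : U ⊆ p.1) :
    ∃ U2 ⊆ q.1, ((L₁.normFdr).prod L₂).Trace (U, p.2) σ (U2, q.2) := by
  induction h with
  | nil => exact ⟨U, hU, .nil _⟩
  | snoc _ htr ih =>
    obtain ⟨W, hW, hT⟩ := ih
    rcases htr with ⟨rfl, h1, h2⟩ | ⟨b, rfl, ⟨c, hc, hd, hV⟩, h2⟩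
    · exact ⟨W, h1 ▸ hW, .snoc hT (Or.inl ⟨rfl, rfl, h2⟩)⟩
    · refine ⟨{t | ∃ s ∈ W, L₁.Weak s [c] t}, ?_,
        .snoc hT (Or.inr ⟨b, rfl, ⟨c, hc, ?_, rfl⟩, h2⟩)⟩
      · rw [hV]
        rintro t ⟨x, hx, hw⟩
        exact ⟨x, hW hx, hw⟩
      · rintro ⟨x, hx, hw⟩
        exact hd ⟨x, hW hx, hw⟩

/-- if a larger product state can reach an FD-witness by
following `σ`, so can the smaller one. -/
theorem FDwitness_reach_mono {S₁ S₂ Act : Type*} (L₁ : LTS S₁ Act) (L₂ : LTS S₂ Act) :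
    ∀ (U V : Set S₁) (s : S₂), U ⊆ V →
      ∀ σ : List (Option Act),
        (∃ q : Set S₁ × S₂, ((L₁.normFdr).prod L₂).Trace (V, s) σ q ∧ FDwitness L₁ L₂ q) →
        (∃ q : Set S₁ × S₂, ((L₁.normFdr).prod L₂).Trace (U, s) σ q ∧ FDwitness L₁ L₂ q) := by
  rintro U V s hUV σ ⟨q, hT, hnd, hw⟩
  obtain ⟨U2, hU2, hT2⟩ := trace_sim L₁ L₂ (V, s) q σ hT U hUV
  refine ⟨(U2, q.2), hT2, ?_, ?_⟩
  · rintro ⟨x, hx, hd⟩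
    exact hnd ⟨x, hU2 hx, hd⟩
  · rcases hw with h | ⟨hs, hr⟩ | h
    · exact Or.inl (Set.subset_eq_empty hU2 h)
    · refine Or.inr (Or.inl ⟨hs, fun hsub => hr fun X hX => ?_⟩)
      obtain ⟨x, hx, hst⟩ := hsub hX
      exact ⟨x, hU2 hx, hst⟩
    · exact Or.inr (Or.inr h)
end
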